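/- arXiv:1908.05272 — 2 statements merged into one kernel-verified Lean document; each statement's English description precedes it below -/
import Mathlib

section
/- Assume (G1) and (a1) hold, α* = 0, and inf_{t∈T} p(t) > 0. Then the step-k rejection set is eventually empty: there exists K such that A_k = {t ∈ S_k : p(t) ≤ b_k} = ∅ for all k ≥ K. -/
open Filter Set MeasureTheory
open scoped Classical

/-!
Each empirical cumulated p-value function is an upper semicontinuous step function, so its uniform
limit `a` is upper semicontinuous. Since `α* = 0`, we have `a r < r / α` for `0 < r ≤ 1`; on the
compact interval `[m, 1]`, where `m > 0` bounds the p-values from below, the gap between the two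
sides is therefore bounded away from `0`, and uniform convergence transfers the strict inequality to
`a_k` for large `k`. Below `m` the function `a_k` vanishes, so `b_k ≤ 0 < m`.
-/

section UniformLimit

variable {E ι : Type*} [TopologicalSpace E] {K : Set E} {l : Filter ι}
  {F : ι → E → ℝ} {f g : E → ℝ}

theorem upperSemicontinuousOn_of_tendstoUniformlyOn [l.NeBot]
    (hF : ∀ i, UpperSemicontinuousOn (F i) K) (hlim : TendstoUniformlyOn F f l K) :
    UpperSemicontinuousOn f K := by
  intro x hx y hxy
  obtain ⟨i, hi⟩ :=
    (Metric.tendstoUniformlyOn_iff.1 hlim ((y - f x) / 2) (half_pos (sub_pos.2 hxy))).exists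
  simp only [Real.dist_eq, abs_lt] at hi
  have hFx : F i x < (f x + y) / 2 := by linarith [hi x hx]
  filter_upwards [hF i x hx _ hFx, self_mem_nhdsWithin] with z hFz hz
  linarith [hi z hz]

theorem exists_pos_forall_add_le_of_isCompact (hK : IsCompact K)
    (hf : UpperSemicontinuousOn f K) (hg : ContinuousOn g K) (hfg : ∀ x ∈ K, f x < g x) :
    ∃ ε > 0, ∀ x ∈ K, f x + ε ≤ g x := by
  obtain rfl | hne := K.eq_empty_or_nonempty
  · exact ⟨1, one_pos, fun x hx => hx.elim⟩
  obtain ⟨x₀, hx₀, hmax⟩ := (hf.add hg.neg.upperSemicontinuousOn).exists_isMaxOn hne hK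
  refine ⟨g x₀ - f x₀, sub_pos.2 (hfg x₀ hx₀), fun x hx => ?_⟩
  have hle : f x + -g x ≤ f x₀ + -g x₀ := hmax hx
  linarith

theorem eventually_forall_lt_of_tendstoUniformlyOn (hK : IsCompact K)
    (hF : ∀ i, UpperSemicontinuousOn (F i) K) (hlim : TendstoUniformlyOn F f l K)
    (hg : ContinuousOn g K) (hfg : ∀ x ∈ K, f x < g x) :
    ∀ᶠ i in l, ∀ x ∈ K, F i x < g x := by
  obtain rfl | _ := l.eq_or_neBot
  · exact eventually_bot
  obtain ⟨ε, hε, hgap⟩ := exists_pos_forall_add_le_of_isCompact hK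
    (upperSemicontinuousOn_of_tendstoUniformlyOn hF hlim) hg hfg
  filter_upwards [Metric.tendstoUniformlyOn_iff.1 hlim ε hε] with i hi x hx
  have hclose := hi x hx
  rw [Real.dist_eq, abs_lt] at hclose
  linarith [hgap x hx]

end UniformLimit

section AdjustedThreshold

variable {α c r : ℝ} {a : ℝ → ℝ}

/-- The adjusted threshold at level `α` of a cumulated p-value function `a`: `α*` when `a` is
the cumulated p-value function of the whole domain, `b_k` when `a` is that of the `k`-th grid. -/
noncomputable def adjustedThreshold (α : ℝ) (a : ℝ → ℝ) : ℝ :=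
  sSup {r ∈ Icc (0 : ℝ) 1 | r / α ≤ a r}

theorem lt_div_of_adjustedThreshold_lt (hr : r ∈ Icc (0 : ℝ) 1) (h : adjustedThreshold α a < r) :
    a r < r / α := by
  by_contra! hle
  exact h.not_ge (le_csSup ⟨1, fun _ hs => hs.1.2⟩ ⟨hr, hle⟩)

theorem adjustedThreshold_le (hc : 0 ≤ c) (h : ∀ r ∈ Ioc c 1, a r < r / α) :
    adjustedThreshold α a ≤ c := by
  refine Real.sSup_le (fun r ⟨hr, hle⟩ => ?_) hc
  by_contra! hcr
  exact (h r ⟨hcr, hr.2⟩).not_ge hle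

end AdjustedThreshold

section Grid

variable {X ι : Type*} {p : X → ℝ}

/-- The cumulated p-value function `a_k` of a finite grid `S`: the proportion of points of `S` whose
p-value is at most `r`. It is identically `0` on an empty grid. -/
noncomputable def gridCumulatedPValue (S : Finset X) (p : X → ℝ) (r : ℝ) : ℝ :=
  ((S.filter (fun s => p s ≤ r)).card : ℝ) / S.card

theorem gridCumulatedPValue_eq_sum_indicator (S : Finset X) (p : X → ℝ) (r : ℝ) :
    gridCumulatedPValue S p r = ∑ s ∈ S, (Ici (p s)).indicator (fun _ => (S.card : ℝ)⁻¹) r := by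
  simp only [gridCumulatedPValue, indicator_apply, mem_Ici, ← Finset.sum_filter, Finset.sum_const,
    nsmul_eq_mul, div_eq_mul_inv]

theorem upperSemicontinuous_gridCumulatedPValue (S : Finset X) (p : X → ℝ) :
    UpperSemicontinuous (gridCumulatedPValue S p) := by
  rw [funext (gridCumulatedPValue_eq_sum_indicator S p)]
  exact upperSemicontinuous_sum fun s _ =>
    isClosed_Ici.upperSemicontinuous_indicator (by positivity)

theorem gridCumulatedPValue_eq_zero {S : Finset X} {r : ℝ} (h : ∀ s ∈ S, r < p s) :
    gridCumulatedPValue S p r = 0 := by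
  rw [gridCumulatedPValue, Finset.filter_false_of_mem fun s hs => (h s hs).not_ge,
    Finset.card_empty, Nat.cast_zero, zero_div]

theorem adjustedThreshold_gridCumulatedPValue_nonpos {S : Finset X} {α m : ℝ} (hα : 0 < α)
    (hp : ∀ s ∈ S, m ≤ p s) (h : ∀ r ∈ Icc m 1, gridCumulatedPValue S p r < r / α) :
    adjustedThreshold α (gridCumulatedPValue S p) ≤ 0 := by
  refine adjustedThreshold_le le_rfl fun r hr => ?_
  obtain hrm | hmr := lt_or_ge r m
  · rw [gridCumulatedPValue_eq_zero fun s hs => hrm.trans_le (hp s hs)]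
    exact div_pos hr.1 hα
  · exact h r ⟨hmr, hr.2⟩

theorem fBH_rejection_set_eventually_empty_general {l : Filter ι} {S : ι → Finset X} {α m : ℝ}
    {a : ℝ → ℝ} (hα : 0 < α) (hm : 0 < m) (hp : ∀ k, ∀ s ∈ S k, m ≤ p s)
    (hlim : TendstoUniformlyOn (fun k => gridCumulatedPValue (S k) p) a l (Icc 0 1))
    (ha : adjustedThreshold α a = 0) :
    ∀ᶠ k in l,
      (S k).filter (fun s => p s ≤ adjustedThreshold α (gridCumulatedPValue (S k) p)) = ∅ := by
  have hsub : Icc m 1 ⊆ Icc (0 : ℝ) 1 := Icc_subset_Icc_left hm.le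
  have hlt : ∀ r ∈ Icc m 1, a r < r / α := fun r hr =>
    lt_div_of_adjustedThreshold_lt (hsub hr) (ha.trans_lt (hm.trans_le hr.1))
  filter_upwards [eventually_forall_lt_of_tendstoUniformlyOn isCompact_Icc
    (fun k => (upperSemicontinuous_gridCumulatedPValue (S k) p).upperSemicontinuousOn _)
    (hlim.mono hsub) (by fun_prop) hlt] with k hk
  refine Finset.filter_false_of_mem fun s hs => not_le.2 ?_
  calc adjustedThreshold α (gridCumulatedPValue (S k) p)
      ≤ 0 := adjustedThreshold_gridCumulatedPValue_nonpos hα (hp k) hk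
    _ < m := hm
    _ ≤ p s := hp k s hs

end Grid

/-- under the grid approximation assumption (G1) and regularity assumption (a1),
if `α* = 0` and `inf_{t ∈ T} p t > 0`, then the step-`k` rejection set
`A_k = {t ∈ S_k : p t ≤ b_k}` is eventually empty. -/
theorem fBH_rejection_set_eventually_empty {d : ℕ}
    (T : Set (EuclideanSpace ℝ (Fin d)))
    (hT_open : IsOpen T) (hT_bdd : Bornology.IsBounded T) (hT_ne : T.Nonempty)
    (hT_norm : volume T = 1)
    (p : EuclideanSpace ℝ (Fin d) → ℝ) (hp_meas : Measurable p)
    (hp_val : ∀ t ∈ T, p t ∈ Set.Icc (0:ℝ) 1)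
    (α : ℝ) (hα : α ∈ Set.Ioo (0:ℝ) 1)
    -- cumulated p-value function and adjusted threshold
    (a : ℝ → ℝ) (ha : ∀ r, a r = (volume {s ∈ T | p s ≤ r}).toReal)
    (αStar : ℝ) (hαStar : αStar = sSup {r ∈ Set.Icc (0:ℝ) 1 | r / α ≤ a r})
    -- nested grids and empirical quantities
    (S : ℕ → Finset (EuclideanSpace ℝ (Fin d)))
    (hS_ne : ∀ k, (S k).Nonempty) (hS_sub : ∀ k, ↑(S k) ⊆ T)
    (hS_mono : ∀ k, S k ⊆ S (k + 1))
    (ak : ℕ → ℝ → ℝ)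
    (hak : ∀ k r, ak k r = (((S k).filter (fun s => p s ≤ r)).card : ℝ) / (S k).card)
    (b : ℕ → ℝ) (hb : ∀ k, b k = sSup {r ∈ Set.Icc (0:ℝ) 1 | r / α ≤ ak k r})
    -- (G1)
    (hG1 : TendstoUniformlyOn ak a atTop (Set.Icc 0 1))
    -- (a1)
    (ha1 : ∀ t ∈ Set.Icc (0:ℝ) 1, volume {s ∈ T | p s = t} = 0)
    -- α* = 0 and the infimum of p over T is positive
    (hαStar0 : αStar = 0)
    (hinf : 0 < sInf (p '' T)) :
    ∃ K, ∀ k ≥ K, (S k).filter (fun t => p t ≤ b k) = ∅ := by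
  obtain rfl : ak = fun k => gridCumulatedPValue (S k) p := funext₂ hak
  obtain rfl : b = fun k => adjustedThreshold α (gridCumulatedPValue (S k) p) := funext hb
  have hbdd : BddBelow (p '' T) := ⟨0, forall_mem_image.2 fun t ht => (hp_val t ht).1⟩
  exact eventually_atTop.1 <| fBH_rejection_set_eventually_empty_general hα.1 hinf
    (fun k s hs => csInf_le hbdd (mem_image_of_mem p (hS_sub k hs))) hG1 (hαStar.symm.trans hαStar0)
end

section
/- Suppose that almost surely the realized p-value function p_ω satisfies (G1), (G2) and (a1)–(a3); that the process (p(·,t))_{t∈T} is PRDS on U; and that P(p(·,t) ≤ x) ≤ x for every t ∈ U and x ∈ [0,1]. Then the step-k false discovery proportions converge almost surely to the limiting false discovery proportion, Q_k → Q, and limsup_{k→∞} E[Q_k] ≤ α·μ(U) ≤ α. -/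
open Filter Set MeasureTheory
open scoped Classical

/-!
The Benjamini–Hochberg threshold `β` of a cumulated p-value function `F` solves `β = α * F β`.
On the grids, the number `R` of rejections therefore satisfies `b_k = α * R / #S_k`, and `Q_k` is a
sum over the null grid points `s` of `1{p_s ≤ α * R / #S_k} / R`. By PRDS the conditional
probability `P(R ≤ r | p_s ≤ x)` is nondecreasing in `x`; splitting over the values of `R` turns
`E[1{p_s ≤ α * R / #S_k} / R]` into a sum dominated by a telescoping one, with value at most
`α / #S_k`. Summing gives the Benjamini–Yekutieli bound `E[Q_k] ≤ α * #(S_k ∩ U) / #S_k`, whose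
right-hand side tends to `α * μ(U)`.

Uniform convergence of the cumulated functions forces `b_k → α*`: points arbitrarily near `α*` with
`a(s) > s / α` bound `b_k` from below, and beyond `α*` the continuous function `r / α - a(r)` has a
positive minimum, which bounds `b_k` from above. Since `Q_k` and `Q` are ratios of the cumulated
functions at the respective thresholds, `Q_k → Q` follows, and if `α* = 0` then no grid point is
rejected from some step on.
-/

section Threshold

/-- The Benjamini–Hochberg threshold at level `α` of a cumulated p-value function `F`: it is `α*`
for `F = a` and `b_k` for `F = a_k`. -/
noncomputable def bhThreshold (α : ℝ) (F : ℝ → ℝ) : ℝ :=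
  sSup {r ∈ Icc (0 : ℝ) 1 | r / α ≤ F r}

variable {α : ℝ} {F : ℝ → ℝ}

lemma le_bhThreshold {r : ℝ} (hr : r ∈ Icc (0 : ℝ) 1) (h : r / α ≤ F r) : r ≤ bhThreshold α F :=
  le_csSup ⟨1, fun _ hs => hs.1.2⟩ ⟨hr, h⟩

lemma bhThreshold_mem_Icc : bhThreshold α F ∈ Icc (0 : ℝ) 1 :=
  ⟨Real.sSup_nonneg fun _ hr => hr.1.1, Real.sSup_le (fun _ hr => hr.1.2) zero_le_one⟩

lemma bhThreshold_le (hα : 0 < α) (hF : ∀ r, F r ≤ 1) : bhThreshold α F ≤ α :=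
  Real.sSup_le (fun r hr => (div_le_one hα).1 (hr.2.trans (hF r))) hα.le

lemma bhThreshold_le_mul (hα : 0 < α) (hF : Monotone F) (h0 : 0 ≤ F (bhThreshold α F)) :
    bhThreshold α F ≤ α * F (bhThreshold α F) :=
  Real.sSup_le (fun _ hr => (div_le_iff₀' hα).1 (hr.2.trans (hF (le_bhThreshold hr.1 hr.2))))
    (mul_nonneg hα.le h0)

lemma bhThreshold_eq_mul (hα : α ∈ Ioc (0 : ℝ) 1) (hF : Monotone F)
    (h01 : F (bhThreshold α F) ∈ Icc (0 : ℝ) 1) :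
    bhThreshold α F = α * F (bhThreshold α F) := by
  have hle := bhThreshold_le_mul hα.1 hF h01.1
  refine hle.antisymm (le_bhThreshold ⟨mul_nonneg hα.1.le h01.1, mul_le_one₀ hα.2 h01.1 h01.2⟩ ?_)
  rw [mul_div_cancel_left₀ _ hα.1.ne']
  exact hF hle

variable {ι : Type*} {l : Filter ι} {Fk : ι → ℝ → ℝ}

lemma eventually_lt_bhThreshold {c : ℝ} (hc : c < bhThreshold α F)
    (hlim : ∀ r ∈ Icc (0 : ℝ) 1, Tendsto (fun k => Fk k r) l (nhds (F r)))
    (hfreq : 0 < bhThreshold α F →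
      ∃ᶠ s in nhdsWithin (bhThreshold α F) (Icc 0 1), s / α < F s) :
    ∀ᶠ k in l, c < bhThreshold α (Fk k) := by
  rcases bhThreshold_mem_Icc.1.eq_or_lt with h | h
  · exact .of_forall fun _ => (h ▸ hc).trans_le bhThreshold_mem_Icc.1
  · obtain ⟨s, hs, hs01, hcs⟩ := ((hfreq h).and_eventually
      (eventually_mem_nhdsWithin.and (eventually_nhdsWithin_of_eventually_nhds
        (lt_mem_nhds hc)))).exists
    filter_upwards [(hlim s hs01).eventually (lt_mem_nhds hs)] with k hk
    exact lt_of_lt_of_le hcs (le_bhThreshold hs01 hk.le)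

lemma eventually_bhThreshold_lt {c : ℝ} (hα : 0 < α) (hc : bhThreshold α F < c)
    (hF : ContinuousOn F (Icc 0 1)) (hmono : ∀ k, Monotone (Fk k)) (h0 : ∀ k r, 0 ≤ Fk k r)
    (hlim : TendstoUniformlyOn Fk F l (Icc 0 1)) :
    ∀ᶠ k in l, bhThreshold α (Fk k) < c := by
  by_cases hc1 : 1 < c
  · exact .of_forall fun _ => bhThreshold_mem_Icc.2.trans_lt hc1
  have hsub : Icc c 1 ⊆ Icc (0 : ℝ) 1 :=
    Icc_subset_Icc_left (bhThreshold_mem_Icc.1.trans hc.le)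
  have hcont : ContinuousOn (fun r => r / α - F r) (Icc c 1) :=
    (continuous_id.div_const α).continuousOn.sub (hF.mono hsub)
  obtain ⟨x, hx, hmin⟩ := isCompact_Icc.exists_isMinOn (nonempty_Icc.2 (not_lt.1 hc1)) hcont
  have hpos : 0 < x / α - F x := by
    by_contra! hle
    exact (hc.trans_le hx.1).not_ge (le_bhThreshold (hsub hx) (sub_nonpos.1 hle))
  filter_upwards [Metric.tendstoUniformlyOn_iff.1 hlim _ hpos] with k hk
  by_contra! hle
  have hmem : bhThreshold α (Fk k) ∈ Icc c 1 := ⟨hle, bhThreshold_mem_Icc.2⟩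
  have hgap : x / α - F x ≤ bhThreshold α (Fk k) / α - F (bhThreshold α (Fk k)) := hmin hmem
  have hfix : bhThreshold α (Fk k) / α ≤ Fk k (bhThreshold α (Fk k)) :=
    (div_le_iff₀' hα).2 (bhThreshold_le_mul hα (hmono k) (h0 k _))
  linarith [(abs_sub_lt_iff.1 (hk _ (hsub hmem))).2]

lemma tendsto_bhThreshold (hα : 0 < α) (hF : ContinuousOn F (Icc 0 1))
    (hmono : ∀ k, Monotone (Fk k)) (h0 : ∀ k r, 0 ≤ Fk k r)
    (hlim : TendstoUniformlyOn Fk F l (Icc 0 1))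
    (hfreq : 0 < bhThreshold α F →
      ∃ᶠ s in nhdsWithin (bhThreshold α F) (Icc 0 1), s / α < F s) :
    Tendsto (fun k => bhThreshold α (Fk k)) l
      (nhdsWithin (bhThreshold α F) (Icc 0 1)) :=
  tendsto_nhdsWithin_iff.2
    ⟨tendsto_order.2
      ⟨fun _ hc => eventually_lt_bhThreshold hc (fun _ hr => hlim.tendsto_at hr) hfreq,
        fun _ hc => eventually_bhThreshold_lt hα hc hF hmono h0 hlim⟩,
      .of_forall fun _ => bhThreshold_mem_Icc⟩

end Threshold

section Cumulated

variable {E : Type*} [MeasurableSpace E] {μ : Measure E} {V : Set E} {q : E → ℝ}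

/-- The cumulated function `r ↦ μ (V ∩ {q ≤ r})` of a p-value function `q` on a region `V`: it is
`a` for `V = T`, and the function approximated in (G2) for `V = U`. -/
noncomputable def cumulated (μ : Measure E) (V : Set E) (q : E → ℝ) (r : ℝ) : ℝ :=
  μ.real (V ∩ {s | q s ≤ r})

lemma cumulated_mono (hV : μ V ≠ ⊤) : Monotone (cumulated μ V q) := fun _ _ h =>
  measureReal_mono (inter_subset_inter_right V fun _ hs => le_trans hs h)
    (measure_ne_top_of_subset inter_subset_left hV)

lemma cumulated_le (hV : μ V ≠ ⊤) (r : ℝ) : cumulated μ V q r ≤ μ.real V :=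
  measureReal_mono inter_subset_left hV

lemma cumulated_eq_of_forall_le {r : ℝ} (h : ∀ s ∈ V, q s ≤ r) : cumulated μ V q r = μ.real V := by
  rw [cumulated, show V ∩ {s | q s ≤ r} = V from inter_eq_left.2 h]

lemma continuousAt_cumulated (hV : MeasurableSet V) (hVtop : μ V ≠ ⊤) (hq : Measurable q) {r : ℝ}
    (hr : μ (V ∩ {s | q s = r}) = 0) : ContinuousAt (cumulated μ V q) r := by
  have hmeas (x : ℝ) : MeasurableSet (V ∩ {s | q s ≤ x}) := hV.inter (hq measurableSet_Iic)
  refine (ENNReal.tendsto_toReal (measure_ne_top_of_subset inter_subset_left hVtop)).comp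
    (tendsto_measure_of_ae_tendsto_indicator _ (hmeas r) hmeas hV hVtop
      (.of_forall fun _ => inter_subset_left) ?_)
  filter_upwards [compl_mem_ae_iff.2 hr] with s hs
  by_cases hsV : s ∈ V
  · rcases lt_or_gt_of_ne fun h => hs ⟨hsV, h⟩ with h | h
    · filter_upwards [lt_mem_nhds h] with x hx
      exact iff_of_true ⟨hsV, hx.le⟩ ⟨hsV, h.le⟩
    · filter_upwards [gt_mem_nhds h] with x hx
      exact iff_of_false (fun hs' => hx.not_ge hs'.2) (fun hs' => h.not_ge hs'.2)
  · exact .of_forall fun _ => iff_of_false (fun hs' => hsV hs'.1) (fun hs' => hsV hs'.1)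

/-- The limiting false discovery proportion `Q` for the p-value function `q`. -/
noncomputable def limitFDP (μ : Measure E) (T U : Set E) (α : ℝ) (q : E → ℝ) : ℝ :=
  if 0 < μ {t ∈ T | q t ≤ bhThreshold α (cumulated μ T q)} then
    μ.real (U ∩ {t | q t ≤ bhThreshold α (cumulated μ T q)}) /
      μ.real {t ∈ T | q t ≤ bhThreshold α (cumulated μ T q)}
  else 0

lemma limitFDP_eq_div (T U : Set E) (α : ℝ) :
    limitFDP μ T U α q = cumulated μ U q (bhThreshold α (cumulated μ T q)) /
      cumulated μ T q (bhThreshold α (cumulated μ T q)) := by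
  rw [limitFDP]
  split_ifs with h
  · rfl
  · have hzero : cumulated μ T q (bhThreshold α (cumulated μ T q)) = 0 :=
      congrArg ENNReal.toReal (nonpos_iff_eq_zero.1 (not_lt.1 h))
    rw [hzero, div_zero]

end Cumulated

section Grid

open scoped Finset

variable {E : Type*} {α : ℝ} {U : Set E} {S : Finset E} {q : E → ℝ}

/-- The empirical cumulated p-value function `a_k` of the grid `S`. -/
noncomputable def gridCumulated (S : Finset E) (q : E → ℝ) (r : ℝ) : ℝ :=
  (#{s ∈ S | q s ≤ r} : ℝ) / #S

/-- The empirical null function of the grid `S` in (G2), which counts only the points of `U` but is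
normalized by the size of the whole grid. -/
noncomputable def gridNullCumulated (S : Finset E) (U : Set E) (q : E → ℝ) (r : ℝ) : ℝ :=
  (#{s ∈ S | s ∈ U ∧ q s ≤ r} : ℝ) / #S

/-- The rejection set `A_k` of the Benjamini–Hochberg procedure on the grid `S`. -/
noncomputable def bhRejections (α : ℝ) (S : Finset E) (q : E → ℝ) : Finset E :=
  {s ∈ S | q s ≤ bhThreshold α (gridCumulated S q)}

/-- The false discovery proportion `Q_k` on the grid `S`. -/
noncomputable def gridFDP (α : ℝ) (U : Set E) (S : Finset E) (q : E → ℝ) : ℝ :=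
  if (bhRejections α S q).Nonempty then
    (#{s ∈ bhRejections α S q | s ∈ U} : ℝ) / #(bhRejections α S q)
  else 0

lemma gridCumulated_mono : Monotone (gridCumulated S q) := fun r r' h => by
  unfold gridCumulated
  gcongr

lemma gridCumulated_mem_Icc (r : ℝ) : gridCumulated S q r ∈ Icc (0 : ℝ) 1 :=
  ⟨by unfold gridCumulated; positivity,
    div_le_one_of_le₀ (by exact_mod_cast Finset.card_filter_le _ _) (Nat.cast_nonneg _)⟩

lemma gridNullCumulated_eq_of_forall_le {r : ℝ} (h : ∀ s ∈ S, q s ≤ r) :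
    gridNullCumulated S U q r = (#{s ∈ S | s ∈ U} : ℝ) / #S := by
  rw [gridNullCumulated, Finset.filter_congr fun s hs => and_iff_left (h s hs)]

lemma card_bhRejections_le : #(bhRejections α S q) ≤ #S :=
  Finset.card_filter_le _ _

lemma bhThreshold_gridCumulated_eq (hα : α ∈ Ioc (0 : ℝ) 1) :
    bhThreshold α (gridCumulated S q) = α / #S * #(bhRejections α S q) := by
  rw [bhThreshold_eq_mul hα gridCumulated_mono (gridCumulated_mem_Icc _), div_mul_eq_mul_div,
    mul_div_assoc]
  rfl

lemma gridFDP_eq_card_div_card :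
    gridFDP α U S q =
      (#{s ∈ bhRejections α S q | s ∈ U} : ℝ) / #(bhRejections α S q) := by
  rw [gridFDP, ite_eq_left_iff, Finset.not_nonempty_iff_eq_empty]
  intro h
  simp [h]

lemma gridFDP_nonneg : 0 ≤ gridFDP α U S q := by
  rw [gridFDP_eq_card_div_card]
  positivity

lemma gridFDP_eq_div :
    gridFDP α U S q = gridNullCumulated S U q (bhThreshold α (gridCumulated S q)) /
      gridCumulated S q (bhThreshold α (gridCumulated S q)) := by
  rcases S.eq_empty_or_nonempty with rfl | hS
  · simp [gridFDP_eq_card_div_card, bhRejections, gridCumulated]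
  · have hcard : (#S : ℝ) ≠ 0 := by exact_mod_cast hS.card_ne_zero
    rw [gridFDP_eq_card_div_card, gridNullCumulated, gridCumulated,
      div_div_div_cancel_right₀ hcard, bhRejections, Finset.filter_filter]
    simp only [and_comm]

lemma gridFDP_eq_zero_of_forall_lt (h : ∀ s ∈ S, bhThreshold α (gridCumulated S q) < q s) :
    gridFDP α U S q = 0 := by
  rw [gridFDP, bhRejections, Finset.filter_false_of_mem fun s hs => (h s hs).not_ge,
    if_neg Finset.not_nonempty_empty]

lemma gridFDP_eq_sum (hα : α ∈ Ioc (0 : ℝ) 1) :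
    gridFDP α U S q = ∑ s ∈ S with s ∈ U,
      if q s ≤ α / #S * #(bhRejections α S q) then (#(bhRejections α S q) : ℝ)⁻¹ else 0 := by
  rw [gridFDP_eq_card_div_card, ← bhThreshold_gridCumulated_eq hα, ← Finset.sum_filter,
    Finset.sum_const, nsmul_eq_mul, ← div_eq_mul_inv, Finset.filter_comm]
  rfl

-- The step-up form of the procedure, which makes the monotone dependence of the number of rejections
-- on the p-values visible.
lemma card_bhRejections_le_iff (hα : α ∈ Ioc (0 : ℝ) 1) {r : ℕ} :
    #(bhRejections α S q) ≤ r ↔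
      ∀ j ∈ Finset.Ioc r #S, #{s ∈ S | q s ≤ α / #S * j} < j := by
  constructor
  · intro hr j hj
    obtain ⟨hrj, hjS⟩ := Finset.mem_Ioc.1 hj
    by_contra! hle
    have hS : (0 : ℝ) < #S := by exact_mod_cast (Nat.zero_le r).trans_lt (hrj.trans_le hjS)
    have hj1 : (j : ℝ) / #S ≤ 1 := (div_le_one hS).2 (by exact_mod_cast hjS)
    have hmul : α / #S * j = α * (j / #S) := by ring
    have hthreshold : α / #S * j ≤ bhThreshold α (gridCumulated S q) := by
      refine le_bhThreshold ?_ ?_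
      · rw [hmul]
        exact ⟨mul_nonneg hα.1.le (by positivity), mul_le_one₀ hα.2 (by positivity) hj1⟩
      · rw [hmul, mul_div_cancel_left₀ _ hα.1.ne', ← hmul]
        exact div_le_div_of_nonneg_right (by exact_mod_cast hle) hS.le
    have hcard : #{s ∈ S | q s ≤ α / #S * j} ≤ #(bhRejections α S q) :=
      Finset.card_le_card (Finset.monotone_filter_right S fun _ _ hs => hs.trans hthreshold)
    exact (hle.trans (hcard.trans hr)).not_gt hrj
  · intro h
    by_contra! hlt
    have hself := h _ (Finset.mem_Ioc.2 ⟨hlt, card_bhRejections_le⟩)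
    rw [← bhThreshold_gridCumulated_eq hα] at hself
    exact hself.false

lemma isUpperSet_card_bhRejections_le (hα : α ∈ Ioc (0 : ℝ) 1) (r : ℕ) :
    IsUpperSet {x : E → ℝ | #(bhRejections α S x) ≤ r} := by
  intro x y hxy hx
  simp only [mem_ofPred_eq, card_bhRejections_le_iff hα] at hx ⊢
  exact fun j hj => (Finset.card_le_card (Finset.monotone_filter_right S
    fun s _ hs => (hxy s).trans hs)).trans_lt (hx j hj)

lemma measurable_card_filter_le {Ω : Type*} [MeasurableSpace Ω] {p : Ω → E → ℝ}
    (hp : ∀ s ∈ S, Measurable fun ω => p ω s) (c : ℝ) :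
    Measurable fun ω => #{s ∈ S | p ω s ≤ c} := by
  simp only [Finset.card_filter]
  exact Finset.measurable_sum _ fun s hs =>
    .ite (measurableSet_le (hp s hs) measurable_const) measurable_const measurable_const

lemma measurable_card_bhRejections {Ω : Type*} [MeasurableSpace Ω] {p : Ω → E → ℝ}
    (hα : α ∈ Ioc (0 : ℝ) 1) (hp : ∀ s ∈ S, Measurable fun ω => p ω s) :
    Measurable fun ω => #(bhRejections α S (p ω)) := by
  refine measurable_of_Iic fun r => ?_
  simp only [preimage, mem_Iic, card_bhRejections_le_iff hα, ofPred_forall]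
  exact Finset.measurableSet_biInter _ fun j _ =>
    measurableSet_lt (measurable_card_filter_le hp _) measurable_const

lemma card_bhRejections_map {ι : Type*} (e : ι ↪ E) (I : Finset ι) :
    #(bhRejections α (I.map e) q) = #(bhRejections α I (q ∘ e)) := by
  have hcum : gridCumulated (I.map e) q = gridCumulated I (q ∘ e) := by
    ext r
    simp [gridCumulated, Finset.filter_map]
  rw [bhRejections, hcum, Finset.filter_map, Finset.card_map]
  rfl

lemma card_bhRejections_univ_equivFin :
    #(bhRejections α Finset.univ fun i => q (S.equivFin.symm i)) = #(bhRejections α S q) := by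
  have hmap : Finset.univ.map (S.equivFin.symm.toEmbedding.trans (.subtype (· ∈ S))) = S := by
    rw [← Finset.map_map, Finset.map_univ_equiv, Finset.univ_eq_attach, Finset.attach_map_val]
  conv_rhs => rw [← hmap, card_bhRejections_map]
  rfl

end Grid

section Convergence

open scoped Finset

variable {E : Type*} [MeasurableSpace E] {μ : Measure E} {T U : Set E} {α : ℝ} {q : E → ℝ}
  {ι : Type*} {l : Filter ι} {S : ι → Finset E}

lemma tendsto_gridFDP_of_pos (hα : 0 < α) (hT : μ T ≠ ⊤)
    (hpos : 0 < bhThreshold α (cumulated μ T q))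
    (hcT : ContinuousOn (cumulated μ T q) (Icc 0 1))
    (hcU : ContinuousOn (cumulated μ U q) (Icc 0 1))
    (hG1 : TendstoUniformlyOn (fun k => gridCumulated (S k) q) (cumulated μ T q) l (Icc 0 1))
    (hG2 : TendstoUniformlyOn (fun k => gridNullCumulated (S k) U q) (cumulated μ U q) l
      (Icc 0 1))
    (hlim : Tendsto (fun k => bhThreshold α (gridCumulated (S k) q)) l
      (nhdsWithin (bhThreshold α (cumulated μ T q)) (Icc 0 1))) :
    Tendsto (fun k => gridFDP α U (S k) q) l (nhds (limitFDP μ T U α q)) := by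
  have hne : cumulated μ T q (bhThreshold α (cumulated μ T q)) ≠ 0 := fun h => by
    have hle := bhThreshold_le_mul hα (cumulated_mono hT) h.ge
    rw [h, mul_zero] at hle
    exact hpos.not_ge hle
  simp only [gridFDP_eq_div, limitFDP_eq_div]
  exact (hG2.tendsto_comp (hcU _ bhThreshold_mem_Icc) hlim).div
    (hG1.tendsto_comp (hcT _ bhThreshold_mem_Icc) hlim) hne

lemma tendsto_gridFDP_of_eq_zero (hα : α ∈ Ioc (0 : ℝ) 1) (hT : μ T ≠ ⊤)
    (hT1 : μ.real T ≤ 1) (hzero : bhThreshold α (cumulated μ T q) = 0)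
    {c : ℝ} (hc : 0 < c) (hq : ∀ t ∈ T, c ≤ q t) (hST : ∀ k, ↑(S k) ⊆ T)
    (hlim : Tendsto (fun k => bhThreshold α (gridCumulated (S k) q)) l (nhds 0)) :
    Tendsto (fun k => gridFDP α U (S k) q) l (nhds (limitFDP μ T U α q)) := by
  have hlimit : limitFDP μ T U α q = 0 := by
    have hfix := bhThreshold_eq_mul hα (cumulated_mono (q := q) hT)
      ⟨measureReal_nonneg, (cumulated_le hT _).trans hT1⟩
    rw [limitFDP_eq_div, (mul_eq_zero.1 (hfix.symm.trans hzero)).resolve_left hα.1.ne', div_zero]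
  rw [hlimit]
  refine tendsto_const_nhds.congr' ?_
  filter_upwards [hlim.eventually (gt_mem_nhds hc)] with k hk
  exact (gridFDP_eq_zero_of_forall_lt fun s hs => hk.trans_le (hq s (hST k hs))).symm

theorem tendsto_gridFDP (hT : MeasurableSet T) (hT1 : μ T = 1) (hU : MeasurableSet U)
    (hUT : U ⊆ T) (hα : α ∈ Ioc (0 : ℝ) 1) (hq : Measurable q) (hq0 : ∀ t ∈ T, 0 ≤ q t)
    (hST : ∀ k, ↑(S k) ⊆ T)
    (hG1 : TendstoUniformlyOn (fun k => gridCumulated (S k) q) (cumulated μ T q) l (Icc 0 1))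
    (hG2 : TendstoUniformlyOn (fun k => gridNullCumulated (S k) U q) (cumulated μ U q) l
      (Icc 0 1))
    (hnull : ∀ r ∈ Icc (0 : ℝ) 1, μ {s ∈ T | q s = r} = 0)
    (hfreq : 0 < bhThreshold α (cumulated μ T q) →
      ∃ᶠ s in nhdsWithin (bhThreshold α (cumulated μ T q)) (Icc 0 1), s / α < cumulated μ T q s)
    (hinf : bhThreshold α (cumulated μ T q) = 0 → 0 < sInf (q '' T)) :
    Tendsto (fun k => gridFDP α U (S k) q) l (nhds (limitFDP μ T U α q)) := by
  have hTtop : μ T ≠ ⊤ := hT1.trans_ne ENNReal.one_ne_top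
  have hcont {V : Set E} (hV : MeasurableSet V) (hVT : V ⊆ T) :
      ContinuousOn (cumulated μ V q) (Icc 0 1) := fun r hr =>
    (continuousAt_cumulated hV (measure_ne_top_of_subset hVT hTtop) hq
      (measure_mono_null (inter_subset_inter_left _ hVT) (hnull r hr))).continuousWithinAt
  have hlim := tendsto_bhThreshold hα.1 (hcont hT subset_rfl) (fun _ => gridCumulated_mono)
    (fun _ r => (gridCumulated_mem_Icc r).1) hG1 hfreq
  rcases bhThreshold_mem_Icc.1.eq_or_lt with hzero | hpos
  · have hbdd : BddBelow (q '' T) := ⟨0, forall_mem_image.2 hq0⟩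
    have hT1' : μ.real T ≤ 1 := by simp [measureReal_def, hT1]
    exact tendsto_gridFDP_of_eq_zero hα hTtop hT1' hzero.symm (hinf hzero.symm)
      (fun t ht => csInf_le hbdd (mem_image_of_mem q ht)) hST
      (hzero ▸ tendsto_nhds_of_tendsto_nhdsWithin hlim)
  · exact tendsto_gridFDP_of_pos hα.1 hTtop hpos (hcont hT subset_rfl) (hcont hU hUT) hG1 hG2 hlim

lemma tendsto_card_filter_mem_div (hq : ∀ t ∈ T, q t ≤ 1) (hUT : U ⊆ T) (hST : ∀ k, ↑(S k) ⊆ T)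
    (hG2 : TendstoUniformlyOn (fun k => gridNullCumulated (S k) U q) (cumulated μ U q) l
      (Icc 0 1)) :
    Tendsto (fun k => (#{s ∈ S k | s ∈ U} : ℝ) / #(S k)) l (nhds (μ.real U)) := by
  have h := hG2.tendsto_at (right_mem_Icc.2 (zero_le_one (α := ℝ)))
  rw [cumulated_eq_of_forall_le fun s hs => hq s (hUT hs)] at h
  exact h.congr fun k => gridNullCumulated_eq_of_forall_le fun s hs => hq s (hST k hs)

end Convergence

section Dependence

open ProbabilityTheory

variable {Ω : Type*} [MeasurableSpace Ω] {P : Measure Ω} [IsFiniteMeasure P] {X : Ω → ℝ}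

lemma measureReal_inter_eq_mul_cond {C : Set Ω} (hC : MeasurableSet C) (B : Set Ω) :
    P.real (C ∩ B) = P.real C * (P[|C]).real B := by
  rw [measureReal_def, ← cond_mul_eq_inter hC, ENNReal.toReal_mul, mul_comm]
  rfl

lemma setIntegral_comp_eq_measureReal_inter {B : Set Ω} (hX : Measurable X)
    (hB : MeasurableSet B) {g : ℝ → ℝ}
    (hg : (fun ω => g (X ω)) =ᵐ[P] P[B.indicator (fun _ => (1 : ℝ)) |
      MeasurableSpace.comap X inferInstance]) {s : Set ℝ} (hs : MeasurableSet s) :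
    ∫ ω in X ⁻¹' s, g (X ω) ∂P = P.real (X ⁻¹' s ∩ B) := by
  rw [integral_congr_ae (ae_restrict_of_ae hg),
    setIntegral_condExp hX.comap_le ((integrable_const _).indicator hB) ⟨s, hs, rfl⟩,
    setIntegral_indicator hB, setIntegral_const, smul_eq_mul, mul_one]

lemma cond_real_le_cond_real_union {B C D : Set Ω} (hB : MeasurableSet B) (hC : MeasurableSet C)
    (hD : MeasurableSet D) (hCD : Disjoint C D) {c : ℝ} (hlow : P.real (C ∩ B) ≤ P.real C * c)
    (hhigh : P.real D * c ≤ P.real (D ∩ B)) : (P[|C]).real B ≤ (P[|C ∪ D]).real B := by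
  rcases (measureReal_nonneg : 0 ≤ P.real C).eq_or_lt with hzero | hpos
  · rw [cond_eq_zero_of_meas_eq_zero ((measureReal_eq_zero_iff).1 hzero.symm)]
    exact measureReal_nonneg
  have hpos_union : 0 < P.real (C ∪ D) := hpos.trans_le (measureReal_mono subset_union_left)
  have hcond_le : (P[|C]).real B ≤ c :=
    le_of_mul_le_mul_left ((measureReal_inter_eq_mul_cond hC B).symm.trans_le hlow) hpos
  refine le_of_mul_le_mul_left ?_ hpos_union
  calc P.real (C ∪ D) * (P[|C]).real B
      = P.real C * (P[|C]).real B + P.real D * (P[|C]).real B := by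
        rw [measureReal_union hCD hD, add_mul]
    _ ≤ P.real (C ∩ B) + P.real (D ∩ B) := by
        rw [measureReal_inter_eq_mul_cond hC]
        gcongr
        exact (mul_le_mul_of_nonneg_left hcond_le measureReal_nonneg).trans hhigh
    _ = P.real (C ∪ D) * (P[|C ∪ D]).real B := by
        rw [← measureReal_inter_eq_mul_cond (hC.union hD), union_inter_distrib_right,
          measureReal_union (hCD.mono inter_subset_left inter_subset_left) (hD.inter hB)]

lemma monotoneOn_cond_Iic_of_condExp {I : Set ℝ} {B : Set Ω} (hX : Measurable X)
    (hXI : ∀ ω, X ω ∈ I) (hB : MeasurableSet B) {g : ℝ → ℝ} (hg : MonotoneOn g I)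
    (hgB : (fun ω => g (X ω)) =ᵐ[P] P[B.indicator (fun _ => (1 : ℝ)) |
      MeasurableSpace.comap X inferInstance]) :
    MonotoneOn (fun x => (P[|X ⁻¹' Iic x]).real B) I := by
  intro x hx y _ hxy
  have hint : Integrable (fun ω => g (X ω)) P := integrable_condExp.congr hgB.symm
  -- `g x` separates the averages of `g ∘ X` over `{X ≤ x}` and over `{x < X ≤ y}`.
  have hlow : P.real (X ⁻¹' Iic x ∩ B) ≤ P.real (X ⁻¹' Iic x) * g x := by
    rw [← setIntegral_comp_eq_measureReal_inter hX hB hgB measurableSet_Iic, ← smul_eq_mul,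
      ← setIntegral_const]
    exact setIntegral_mono_on hint.integrableOn integrableOn_const (hX measurableSet_Iic)
      fun ω hω => hg (hXI ω) hx hω
  have hhigh : P.real (X ⁻¹' Ioc x y) * g x ≤ P.real (X ⁻¹' Ioc x y ∩ B) := by
    rw [← setIntegral_comp_eq_measureReal_inter hX hB hgB measurableSet_Ioc, ← smul_eq_mul,
      ← setIntegral_const]
    exact setIntegral_mono_on integrableOn_const hint.integrableOn (hX measurableSet_Ioc)
      fun ω hω => hg hx (hXI ω) hω.1.le
  have hunion : X ⁻¹' Iic y = X ⁻¹' Iic x ∪ X ⁻¹' Ioc x y := by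
    rw [← preimage_union, Iic_union_Ioc_eq_Iic hxy]
  simp only [hunion]
  exact cond_real_le_cond_real_union hB (hX measurableSet_Iic) (hX measurableSet_Ioc)
    ((Iic_disjoint_Ioc le_rfl).preimage X) hlow hhigh

lemma measureReal_inter_mul_inv_le {R : Ω → ℕ} {β : ℝ} (hβ : 0 ≤ β) (hX : Measurable X)
    (hR : Measurable R) {j : ℕ} (hXj : P.real {ω | X ω ≤ β * (j + 1 : ℕ)} ≤ β * (j + 1 : ℕ))
    (hdep : (P[|{ω | X ω ≤ β * j}]).real {ω | R ω ≤ j} ≤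
      (P[|{ω | X ω ≤ β * (j + 1 : ℕ)}]).real {ω | R ω ≤ j}) :
    P.real ({ω | X ω ≤ β * (j + 1 : ℕ)} ∩ {ω | R ω = j + 1}) * ((j + 1 : ℕ) : ℝ)⁻¹ ≤
      β * ((P[|{ω | X ω ≤ β * (j + 1 : ℕ)}]).real {ω | R ω ≤ j + 1} -
        (P[|{ω | X ω ≤ β * j}]).real {ω | R ω ≤ j}) := by
  set C := {ω | X ω ≤ β * (j + 1 : ℕ)}
  have hsplit : {ω | R ω = j + 1} = {ω | R ω ≤ j + 1} \ {ω | R ω ≤ j} := by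
    ext ω
    simp only [Set.mem_sdiff, mem_ofPred_eq]
    lia
  have hdiff : (P[|C]).real {ω | R ω = j + 1} =
      (P[|C]).real {ω | R ω ≤ j + 1} - (P[|C]).real {ω | R ω ≤ j} := by
    have hsub : {ω | R ω ≤ j} ⊆ {ω | R ω ≤ j + 1} := fun _ hω => Nat.le_succ_of_le hω
    rw [hsplit, measureReal_sdiff hsub (hR measurableSet_Iic)]
  calc P.real (C ∩ {ω | R ω = j + 1}) * ((j + 1 : ℕ) : ℝ)⁻¹
      = P.real C * (P[|C]).real {ω | R ω = j + 1} * ((j + 1 : ℕ) : ℝ)⁻¹ := by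
        rw [measureReal_inter_eq_mul_cond (measurableSet_le hX measurable_const)]
    _ ≤ β * (j + 1 : ℕ) * (P[|C]).real {ω | R ω = j + 1} * ((j + 1 : ℕ) : ℝ)⁻¹ := by
        gcongr
    _ = β * (P[|C]).real {ω | R ω = j + 1} := by field_simp
    _ ≤ _ := by
        rw [hdiff]
        gcongr

lemma integral_ite_le_mul_inv_eq_sum {R : Ω → ℕ} {m : ℕ} (β : ℝ) (hX : Measurable X)
    (hR : Measurable R) (hRm : ∀ ω, R ω ≤ m) :
    ∫ ω, (if X ω ≤ β * R ω then (R ω : ℝ)⁻¹ else 0) ∂P =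
      ∑ j ∈ Finset.range (m + 1), P.real ({ω | X ω ≤ β * j} ∩ {ω | R ω = j}) * (j : ℝ)⁻¹ := by
  have hmeas (j : ℕ) : MeasurableSet ({ω | X ω ≤ β * j} ∩ {ω | R ω = j}) :=
    (measurableSet_le hX measurable_const).inter (hR (measurableSet_singleton j))
  have hpoint (ω : Ω) : (if X ω ≤ β * R ω then (R ω : ℝ)⁻¹ else 0) =
      ∑ j ∈ Finset.range (m + 1),
        ({ω | X ω ≤ β * j} ∩ {ω | R ω = j}).indicator (fun _ => (j : ℝ)⁻¹) ω := by
    rw [Finset.sum_eq_single_of_mem (R ω) (Finset.mem_range_succ_iff.2 (hRm ω))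
      fun j _ hj => indicator_of_notMem (fun h => hj h.2.symm) _]
    simp [indicator]
  simp_rw [hpoint]
  rw [integral_finsetSum _ fun j _ => (integrable_const _).indicator (hmeas j)]
  simp_rw [integral_indicator_const _ (hmeas _), smul_eq_mul]

lemma integral_ite_le_mul_inv_le {R : Ω → ℕ} {m : ℕ} {β : ℝ} (hβ : 0 ≤ β) (hβm : β * m ≤ 1)
    (hX : Measurable X) (hR : Measurable R) (hRm : ∀ ω, R ω ≤ m)
    (hsuper : ∀ x ∈ Icc (0 : ℝ) 1, P.real {ω | X ω ≤ x} ≤ x)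
    (hdep : ∀ r, MonotoneOn (fun x => (P[|{ω | X ω ≤ x}]).real {ω | R ω ≤ r}) (Icc 0 1)) :
    ∫ ω, (if X ω ≤ β * R ω then (R ω : ℝ)⁻¹ else 0) ∂P ≤ β := by
  have hmem {j : ℕ} (hj : j ≤ m) : β * j ∈ Icc (0 : ℝ) 1 :=
    ⟨by positivity, le_trans (by gcongr) hβm⟩
  let H (j : ℕ) : ℝ := (P[|{ω | X ω ≤ β * j}]).real {ω | R ω ≤ j}
  calc ∫ ω, (if X ω ≤ β * R ω then (R ω : ℝ)⁻¹ else 0) ∂P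
      = ∑ j ∈ Finset.range m, P.real ({ω | X ω ≤ β * (j + 1 : ℕ)} ∩ {ω | R ω = j + 1}) *
          ((j + 1 : ℕ) : ℝ)⁻¹ := by
        rw [integral_ite_le_mul_inv_eq_sum β hX hR hRm, Finset.sum_range_succ', Nat.cast_zero,
          inv_zero, mul_zero, add_zero]
    _ ≤ ∑ j ∈ Finset.range m, β * (H (j + 1) - H j) := by
        refine Finset.sum_le_sum fun j hj => ?_
        have hjm : j + 1 ≤ m := Finset.mem_range.1 hj
        exact measureReal_inter_mul_inv_le hβ hX hR (hsuper _ (hmem hjm))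
          (hdep j (hmem (j.le_succ.trans hjm)) (hmem hjm) (by gcongr; exact j.le_succ))
    _ = β * (H m - H 0) := by rw [← Finset.mul_sum, Finset.sum_range_sub]
    _ ≤ β := mul_le_of_le_one_right hβ
        ((sub_le_self _ measureReal_nonneg).trans measureReal_le_one)

end Dependence

section FalseDiscoveryRate

open ProbabilityTheory
open scoped Finset

variable {E Ω : Type*} [MeasurableSpace Ω] {P : Measure Ω} {p : Ω → E → ℝ} {T U : Set E}

/-- Positive regression dependency on the subset `U` of the process `(p(·,t))_{t ∈ T}`: the
conditional probability of an increasing event given one p-value with index in `U` has a version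
that is a nondecreasing function of this p-value. -/
def IsPRDSOn (P : Measure Ω) (p : Ω → E → ℝ) (T U : Set E) : Prop :=
  ∀ (l : ℕ) (t : Fin l → E), (∀ i, t i ∈ T) → ∀ j, t j ∈ U →
    ∀ D : Set (Fin l → ℝ), MeasurableSet D → IsUpperSet D →
      ∃ g : ℝ → ℝ, MonotoneOn g (Icc 0 1) ∧
        (fun ω => g (p ω (t j))) =ᵐ[P]
          P[(fun ω => D.indicator (fun _ => (1 : ℝ)) fun i => p ω (t i)) |
            MeasurableSpace.comap (fun ω => p ω (t j)) inferInstance]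

lemma IsPRDSOn.mono {T' : Set E} (h : IsPRDSOn P p T U) (hT : T' ⊆ T) : IsPRDSOn P p T' U :=
  fun l t ht => h l t fun i => hT (ht i)

variable {α : ℝ} {S : Finset E}

lemma IsPRDSOn.monotoneOn_cond_card_bhRejections_le [IsFiniteMeasure P] (h : IsPRDSOn P p S U)
    (hα : α ∈ Ioc (0 : ℝ) 1) (hp : ∀ s ∈ S, Measurable fun ω => p ω s) {s : E} (hs : s ∈ S)
    (hsU : s ∈ U) (hs01 : ∀ ω, p ω s ∈ Icc (0 : ℝ) 1) (r : ℕ) :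
    MonotoneOn (fun x => (P[|{ω | p ω s ≤ x}]).real {ω | #(bhRejections α S (p ω)) ≤ r})
      (Icc 0 1) := by
  obtain ⟨j, rfl⟩ : ∃ j, (S.equivFin.symm j : E) = s := ⟨S.equivFin ⟨s, hs⟩, by simp⟩
  obtain ⟨g, hg, hgD⟩ := h #S (fun i => S.equivFin.symm i) (fun i => (S.equivFin.symm i).2) j hsU
    {x | #(bhRejections α Finset.univ x) ≤ r}
    (measurable_card_bhRejections hα (fun i _ => measurable_pi_apply i) measurableSet_Iic)
    (isUpperSet_card_bhRejections_le hα r)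
  refine monotoneOn_cond_Iic_of_condExp (hp _ hs) hs01
    (measurable_card_bhRejections hα hp measurableSet_Iic) hg ?_
  convert hgD using 2
  ext ω
  simp only [indicator, mem_ofPred_eq, card_bhRejections_univ_equivFin]

theorem IsPRDSOn.integral_gridFDP_le [IsFiniteMeasure P] (h : IsPRDSOn P p S U)
    (hα : α ∈ Ioc (0 : ℝ) 1) (hp : ∀ s ∈ S, Measurable fun ω => p ω s)
    (hp01 : ∀ ω, ∀ s ∈ S, p ω s ∈ Icc (0 : ℝ) 1)
    (hsuper : ∀ s ∈ S, s ∈ U → ∀ x ∈ Icc (0 : ℝ) 1, P {ω | p ω s ≤ x} ≤ ENNReal.ofReal x) :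
    ∫ ω, gridFDP α U S (p ω) ∂P ≤ α * ((#{s ∈ S | s ∈ U} : ℝ) / #S) := by
  have hR : Measurable fun ω => #(bhRejections α S (p ω)) := measurable_card_bhRejections hα hp
  have hRreal : Measurable fun ω => (#(bhRejections α S (p ω)) : ℝ) := measurable_from_top.comp hR
  have hint : ∀ s ∈ S, Integrable (fun ω => if p ω s ≤ α / #S * #(bhRejections α S (p ω)) then
      (#(bhRejections α S (p ω)) : ℝ)⁻¹ else 0) P := fun s hs => by
    refine .of_bound (C := 1) (Measurable.ite (measurableSet_le (hp s hs) (hRreal.const_mul _))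
      hRreal.inv measurable_const).aestronglyMeasurable (.of_forall fun ω => ?_)
    split_ifs
    · rw [Real.norm_of_nonneg (by positivity)]
      exact Nat.cast_inv_le_one _
    · simp
  simp_rw [gridFDP_eq_sum hα]
  rw [integral_finsetSum _ fun s hs => hint s (Finset.mem_filter.1 hs).1]
  calc _ ≤ ∑ s ∈ S with s ∈ U, α / #S := by
        refine Finset.sum_le_sum fun s hs => ?_
        obtain ⟨hsS, hsU⟩ := Finset.mem_filter.1 hs
        have hαS : α / #S * #S ≤ 1 := by
          rw [div_mul_eq_mul_div, mul_div_assoc]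
          exact mul_le_one₀ hα.2 (by positivity) (div_self_le_one _)
        exact integral_ite_le_mul_inv_le (div_nonneg hα.1.le (Nat.cast_nonneg _)) hαS (hp s hsS)
          hR (fun _ => card_bhRejections_le)
          (fun x hx => ENNReal.toReal_le_of_le_ofReal hx.1 (hsuper s hsS hsU x hx))
          (h.monotoneOn_cond_card_bhRejections_le hα hp hsS hsU fun ω => hp01 ω s hsS)
    _ = α * ((#{s ∈ S | s ∈ U} : ℝ) / #S) := by
        rw [Finset.sum_const, nsmul_eq_mul]
        ring

lemma limsup_integral_gridFDP_le [IsFiniteMeasure P] {S : ℕ → Finset E} (hα : α ∈ Ioc (0 : ℝ) 1)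
    (hp : ∀ t ∈ T, Measurable fun ω => p ω t)
    (hp01 : ∀ ω, ∀ t ∈ T, p ω t ∈ Icc (0 : ℝ) 1) (hST : ∀ k, ↑(S k) ⊆ T)
    (hPRDS : IsPRDSOn P p T U)
    (hsuper : ∀ t ∈ U, ∀ x ∈ Icc (0 : ℝ) 1, P {ω | p ω t ≤ x} ≤ ENNReal.ofReal x)
    {c : ℝ} (hlim : Tendsto (fun k => (#{s ∈ S k | s ∈ U} : ℝ) / #(S k)) atTop (nhds c)) :
    limsup (fun k => ∫ ω, gridFDP α U (S k) (p ω) ∂P) atTop ≤ α * c := by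
  have hle (k : ℕ) := (hPRDS.mono (hST k)).integral_gridFDP_le hα (fun s hs => hp s (hST k hs))
    (fun ω s hs => hp01 ω s (hST k hs)) fun s _ => hsuper s
  have hnonneg (k : ℕ) : 0 ≤ ∫ ω, gridFDP α U (S k) (p ω) ∂P :=
    integral_nonneg fun _ => gridFDP_nonneg
  rw [← (hlim.const_mul α).limsup_eq]
  exact limsup_le_limsup (.of_forall hle)
    (isBoundedUnder_of ⟨0, hnonneg⟩).isCoboundedUnder_le (hlim.const_mul α).isBoundedUnder_le

end FalseDiscoveryRate

theorem fBH_fdp_tendsto_ae_and_limsup_control_general {E Ω : Type*} [MeasurableSpace E]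
    {μ : Measure E} {T U : Set E} (hT : MeasurableSet T) (hT1 : μ T = 1) (hU : MeasurableSet U)
    (hUT : U ⊆ T) {α : ℝ} (hα : α ∈ Ioc (0 : ℝ) 1) [MeasurableSpace Ω] {P : Measure Ω}
    [IsProbabilityMeasure P] {p : Ω → E → ℝ} (hp : ∀ t ∈ T, Measurable fun ω => p ω t)
    (hp' : ∀ ω, Measurable (p ω)) (hp01 : ∀ ω, ∀ t ∈ T, p ω t ∈ Icc (0 : ℝ) 1)
    {S : ℕ → Finset E} (hST : ∀ k, ↑(S k) ⊆ T)
    (hae : ∀ᵐ ω ∂P,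
      TendstoUniformlyOn (fun k => gridCumulated (S k) (p ω)) (cumulated μ T (p ω)) atTop
        (Icc 0 1) ∧
      TendstoUniformlyOn (fun k => gridNullCumulated (S k) U (p ω)) (cumulated μ U (p ω)) atTop
        (Icc 0 1) ∧
      (∀ r ∈ Icc (0 : ℝ) 1, μ {s ∈ T | p ω s = r} = 0) ∧
      (0 < bhThreshold α (cumulated μ T (p ω)) →
        ∃ᶠ s in nhdsWithin (bhThreshold α (cumulated μ T (p ω))) (Icc 0 1),
          s / α < cumulated μ T (p ω) s) ∧
      (bhThreshold α (cumulated μ T (p ω)) = 0 → 0 < sInf (p ω '' T)))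
    (hPRDS : IsPRDSOn P p T U)
    (hsuper : ∀ t ∈ U, ∀ x ∈ Icc (0 : ℝ) 1, P {ω | p ω t ≤ x} ≤ ENNReal.ofReal x) :
    (∀ᵐ ω ∂P, Tendsto (fun k => gridFDP α U (S k) (p ω)) atTop
      (nhds (limitFDP μ T U α (p ω)))) ∧
    limsup (fun k => ∫ ω, gridFDP α U (S k) (p ω) ∂P) atTop ≤ α * μ.real U ∧
    α * μ.real U ≤ α := by
  refine ⟨?_, ?_, mul_le_of_le_one_right hα.1.le ?_⟩
  · filter_upwards [hae] with ω ⟨hG1, hG2, hnull, hfreq, hinf⟩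
    exact tendsto_gridFDP hT hT1 hU hUT hα (hp' ω) (fun t ht => (hp01 ω t ht).1) hST hG1 hG2
      hnull hfreq hinf
  · obtain ⟨ω, -, hG2, -⟩ := hae.exists
    exact limsup_integral_gridFDP_le hα hp hp01 hST hPRDS hsuper
      (tendsto_card_filter_mem_div (fun t ht => (hp01 ω t ht).2) hUT hST hG2)
  · exact ENNReal.toReal_le_of_le_ofReal zero_le_one
      (by simpa only [ENNReal.ofReal_one, ← hT1] using measure_mono hUT)

/-- if almost surely the realized p-value function `p_ω` satisfies (G1), (G2) and
(a1)–(a3), the process `(p(·,t))_{t∈T}` is PRDS on `U`, and the null p-values are superuniform,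
then `Q_k → Q` almost surely and `limsup_k E[Q_k] ≤ α·μ(U) ≤ α`. -/
theorem fBH_fdp_tendsto_ae_and_limsup_control {d : ℕ}
    (T : Set (EuclideanSpace ℝ (Fin d)))
    (hT_open : IsOpen T) (hT_bdd : Bornology.IsBounded T) (hT_ne : T.Nonempty)
    (hT_norm : volume T = 1)
    (U : Set (EuclideanSpace ℝ (Fin d))) (hU_sub : U ⊆ T) (hU_meas : MeasurableSet U)
    (α : ℝ) (hα : α ∈ Set.Ioo (0:ℝ) 1)
    {Ω : Type*} [MeasurableSpace Ω] (P : Measure Ω) [IsProbabilityMeasure P]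
    -- the random p-value function
    (p : Ω → EuclideanSpace ℝ (Fin d) → ℝ)
    (hp_meas : ∀ t, Measurable (fun ω => p ω t))
    (hp_meas' : ∀ ω, Measurable (p ω))
    (hp_val : ∀ ω, ∀ t ∈ T, p ω t ∈ Set.Icc (0:ℝ) 1)
    -- realized cumulated p-value functions and adjusted thresholds
    (a : Ω → ℝ → ℝ) (ha : ∀ ω r, a ω r = (volume {s ∈ T | p ω s ≤ r}).toReal)
    (αStar : Ω → ℝ)
    (hαStar : ∀ ω, αStar ω = sSup {r ∈ Set.Icc (0:ℝ) 1 | r / α ≤ a ω r})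
    -- nested grids and empirical quantities
    (S : ℕ → Finset (EuclideanSpace ℝ (Fin d)))
    (hS_ne : ∀ k, (S k).Nonempty) (hS_sub : ∀ k, ↑(S k) ⊆ T)
    (hS_mono : ∀ k, S k ⊆ S (k + 1))
    (ak : Ω → ℕ → ℝ → ℝ)
    (hak : ∀ ω k r, ak ω k r = (((S k).filter (fun s => p ω s ≤ r)).card : ℝ) / (S k).card)
    (b : Ω → ℕ → ℝ)
    (hb : ∀ ω k, b ω k = sSup {r ∈ Set.Icc (0:ℝ) 1 | r / α ≤ ak ω k r})
    (aU : Ω → ℝ → ℝ) (haU : ∀ ω r, aU ω r = (volume (U ∩ {s | p ω s ≤ r})).toReal)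
    (aUk : Ω → ℕ → ℝ → ℝ)
    (haUk : ∀ ω k r, aUk ω k r =
      (((S k).filter (fun s => s ∈ U ∧ p ω s ≤ r)).card : ℝ) / (S k).card)
    -- step-k rejection sets and false discovery proportions
    (A : Ω → ℕ → Finset (EuclideanSpace ℝ (Fin d)))
    (hA : ∀ ω k, A ω k = (S k).filter (fun t => p ω t ≤ b ω k))
    (Qk : ℕ → Ω → ℝ)
    (hQk : ∀ k ω, Qk k ω = if (A ω k).Nonempty
      then (((A ω k).filter (fun t => t ∈ U)).card : ℝ) / (A ω k).card else 0)
    -- limiting false discovery proportion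
    (Q : Ω → ℝ)
    (hQ : ∀ ω, Q ω = if 0 < volume {t ∈ T | p ω t ≤ αStar ω}
      then (volume (U ∩ {t | p ω t ≤ αStar ω})).toReal /
        (volume {t ∈ T | p ω t ≤ αStar ω}).toReal
      else 0)
    -- almost surely (G1), (G2) and (a1)–(a3) hold for the realized p-value function
    (hae : ∀ᵐ ω ∂P,
      TendstoUniformlyOn (ak ω) (a ω) atTop (Set.Icc 0 1) ∧
      TendstoUniformlyOn (aUk ω) (aU ω) atTop (Set.Icc 0 1) ∧
      (∀ t ∈ Set.Icc (0:ℝ) 1, volume {s ∈ T | p ω s = t} = 0) ∧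
      (αStar ω ∈ Set.Ioc 0 α → ∀ O : Set ℝ, IsOpen O → αStar ω ∈ O →
        ∃ s₁ ∈ O ∩ Set.Icc (0:ℝ) 1, ∃ s₂ ∈ O ∩ Set.Icc (0:ℝ) 1,
          s₁ / α < a ω s₁ ∧ a ω s₂ < s₂ / α) ∧
      (αStar ω = 0 → 0 < sInf (p ω '' T)))
    -- the process is PRDS on U
    (hPRDS : ∀ (l : ℕ) (t : Fin l → EuclideanSpace ℝ (Fin d)), (∀ j, t j ∈ T) →
      ∀ j : Fin l, t j ∈ U →
      ∀ D : Set (Fin l → ℝ), MeasurableSet D →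
      (∀ x y : Fin l → ℝ, x ∈ D → x ≤ y → y ∈ D) →
      ∃ g : ℝ → ℝ, MonotoneOn g (Set.Icc 0 1) ∧
        (fun ω => g (p ω (t j))) =ᵐ[P]
          P[(fun ω => D.indicator (fun _ => (1:ℝ)) (fun i => p ω (t i))) |
            MeasurableSpace.comap (fun ω => p ω (t j)) (inferInstance : MeasurableSpace ℝ)])
    -- superuniformity of the null p-values
    (hsuper : ∀ t ∈ U, ∀ x ∈ Set.Icc (0:ℝ) 1,
      P {ω | p ω t ≤ x} ≤ ENNReal.ofReal x) :
    (∀ᵐ ω ∂P, Tendsto (fun k => Qk k ω) atTop (nhds (Q ω))) ∧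
    limsup (fun k => ∫ ω, Qk k ω ∂P) atTop ≤ α * (volume U).toReal ∧
    α * (volume U).toReal ≤ α := by
  obtain rfl := funext₂ ha
  obtain rfl := funext hαStar
  obtain rfl := funext₂ haU
  obtain rfl := funext hQ
  obtain rfl := funext fun ω => funext₂ (hak ω)
  obtain rfl := funext₂ hb
  obtain rfl := funext fun ω => funext₂ (haUk ω)
  obtain rfl := funext₂ hA
  obtain rfl := funext₂ hQk
  refine fBH_fdp_tendsto_ae_and_limsup_control_general hT_open.measurableSet hT_norm hU_meas hU_sub
    (Ioo_subset_Ioc_self hα) (fun t _ => hp_meas t) hp_meas' hp_val hS_sub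
    (hae.mono fun ω ⟨hG1, hG2, hnull, hcross, hinf⟩ => ⟨hG1, hG2, hnull, fun hpos => ?_, hinf⟩)
    (fun l t ht j hj D hD hup => hPRDS l t ht j hj D hD fun _ _ hx hxy => hup hxy hx) hsuper
  exact (nhdsWithin_basis_open _ _).frequently_iff.2 fun O ⟨hmem, hO⟩ =>
    let ⟨s₁, hs₁, _, _, hs, _⟩ := hcross ⟨hpos, bhThreshold_le hα.1 fun r =>
      (cumulated_le (by simp [hT_norm]) r).trans (by simp [measureReal_def, hT_norm])⟩ O hO hmem
    ⟨s₁, hs₁, hs⟩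
end
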